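/- Let τ be the unique positive real with τ·Ω''(τ) = 1 and Λ := Ψ(τ), and let λ satisfy Λ < λ < 1. Let ζ be the unique positive real with Ψ(ζ) = λ (so τ < ζ). Then ( (1−Λ)/(1−λ) )^{1−λ} · e^{Λ−λ} · (ζ/τ)^{λ} · exp( Ω(τ)/τ − Ω(ζ)/ζ ) < 1. Moreover ζ·Ω''(ζ) > 1, while for λ < Λ one has ζ·Ω''(ζ) < 1 and for λ = Λ one has ζ·Ω''(ζ) = 1 (the expected excess degree criterion for the birth of the giant component). -/

import Mathlib

/-- `Ω(z) = ∑_{t≥2} ω_t z^t / t!`. -/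
noncomputable def Om (ω : ℕ → ℝ) (z : ℝ) : ℝ := ∑' t : ℕ, ω t * z ^ t / t.factorial

/-- `Ψ(z) = Ω'(z) − Ω(z)/z`. -/
noncomputable def Psi (ω : ℕ → ℝ) (z : ℝ) : ℝ := deriv (Om ω) z - Om ω z / z

/-!
Let `f` be twice differentiable on `[0, ∞)` with `f 0 ≥ 0` and `z f''(z)` strictly increasing, and
put `Ψ(z) = f'(z) - f(z)/z`. Since `(z Ψ(z))' = z f''(z)`, the mean value theorem on `[0, z]` gives
`Ψ(z) < z f''(z)`, that is, `Ψ'(z) = (z f''(z) - Ψ(z))/z > 0`. Hence comparing `Ψ(ζ)` with `Ψ(τ)`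
amounts to comparing `ζ` with `τ`, and therefore `ζ f''(ζ)` with `τ f''(τ) = 1`.

For the inequality, substitute `λ = Ψ(z)`, `ζ = z` in the logarithm of its left-hand side. The
result vanishes at `z = τ` and has derivative `Ψ'(z) (log (z (1 - Ψ(z))) - log (τ (1 - Ψ(τ))))`.
This is negative for `z > τ`, because `z (1 - Ψ(z))` has derivative `1 - z f''(z) < 0` there.
-/

open Set

section DerivSubSlope

/-- The operator `f ↦ Ψ`, where `Ψ(z) = f'(z) - f(z)/z`, so that `Psi ω = derivSubSlope (Om ω)`
holds by definition. Equivalently `Ψ(z) = z (f(z)/z)'` for `z ≠ 0`; only `z > 0` is meaningful,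
since `f 0 / 0 = 0`. -/
noncomputable def derivSubSlope (f : ℝ → ℝ) (z : ℝ) : ℝ := deriv f z - f z / z

variable {f : ℝ → ℝ} {z τ : ℝ}

theorem hasDerivAt_div_id (hf : DifferentiableAt ℝ f z) (hz : z ≠ 0) :
    HasDerivAt (fun x ↦ f x / x) (derivSubSlope f z / z) z := by
  refine (hf.hasDerivAt.div (hasDerivAt_id z) hz).congr_deriv ?_
  simp only [derivSubSlope, id]
  field_simp

theorem hasDerivAt_derivSubSlope (hf : DifferentiableAt ℝ f z)
    (hf' : DifferentiableAt ℝ (deriv f) z) (hz : z ≠ 0) :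
    HasDerivAt (derivSubSlope f) ((z * deriv (deriv f) z - derivSubSlope f z) / z) z := by
  refine (hf'.hasDerivAt.sub (hasDerivAt_div_id hf hz)).congr_deriv ?_
  field_simp

theorem hasDerivAt_mul_one_sub_derivSubSlope (hf : DifferentiableAt ℝ f z)
    (hf' : DifferentiableAt ℝ (deriv f) z) (hz : z ≠ 0) :
    HasDerivAt (fun x ↦ x * (1 - derivSubSlope f x)) (1 - z * deriv (deriv f) z) z := by
  refine ((hasDerivAt_id z).mul
    ((hasDerivAt_derivSubSlope hf hf' hz).const_sub 1)).congr_deriv ?_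
  simp only [id]
  field_simp
  ring

theorem derivSubSlope_lt_mul_deriv_deriv (hf : ∀ x, 0 ≤ x → DifferentiableAt ℝ f x)
    (hf' : ∀ x, 0 ≤ x → DifferentiableAt ℝ (deriv f) x) (hf₀ : 0 ≤ f 0)
    (hmono : StrictMonoOn (fun x ↦ x * deriv (deriv f) x) (Ioi 0)) (hz : 0 < z) :
    derivSubSlope f z < z * deriv (deriv f) z := by
  have hderiv : ∀ x, 0 ≤ x →
      HasDerivAt (fun x ↦ x * deriv f x - f x) (x * deriv (deriv f) x) x := fun x hx ↦ by
    refine (((hasDerivAt_id x).mul (hf' x hx).hasDerivAt).sub (hf x hx).hasDerivAt).congr_deriv ?_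
    simp only [id]
    ring
  obtain ⟨c, ⟨hc₀, hcz⟩, hc⟩ := exists_hasDerivAt_eq_slope _ _ hz
    (fun x hx ↦ (hderiv x hx.1).continuousAt.continuousWithinAt) (fun x hx ↦ hderiv x hx.1.le)
  calc derivSubSlope f z = (z * deriv f z - f z) / z := by
        rw [derivSubSlope]
        field_simp
    _ ≤ (z * deriv f z - f z - (0 * deriv f 0 - f 0)) / (z - 0) := by
        rw [zero_mul, zero_sub, sub_neg_eq_add, sub_zero]
        gcongr
        exact le_add_of_nonneg_right hf₀
    _ = c * deriv (deriv f) c := hc.symm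
    _ < z * deriv (deriv f) z := hmono hc₀ hz hcz

theorem strictMonoOn_derivSubSlope (hf : ∀ x, 0 < x → DifferentiableAt ℝ f x)
    (hf' : ∀ x, 0 < x → DifferentiableAt ℝ (deriv f) x)
    (hlt : ∀ x, 0 < x → derivSubSlope f x < x * deriv (deriv f) x) :
    StrictMonoOn (derivSubSlope f) (Ioi 0) := by
  have hderiv : ∀ x, 0 < x → HasDerivAt (derivSubSlope f) _ x := fun x hx ↦
    hasDerivAt_derivSubSlope (hf x hx) (hf' x hx) hx.ne'
  refine strictMonoOn_of_hasDerivWithinAt_pos (convex_Ioi 0)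
    (fun x hx ↦ (hderiv x hx).continuousAt.continuousWithinAt)
    (fun x hx ↦ (hderiv x (interior_subset hx)).hasDerivWithinAt) fun x hx ↦ ?_
  have hx : 0 < x := interior_subset hx
  exact div_pos (sub_pos.2 (hlt x hx)) hx

theorem strictAntiOn_mul_one_sub_derivSubSlope (hf : ∀ x, 0 < x → DifferentiableAt ℝ f x)
    (hf' : ∀ x, 0 < x → DifferentiableAt ℝ (deriv f) x)
    (hmono : StrictMonoOn (fun x ↦ x * deriv (deriv f) x) (Ioi 0))
    (hτ₀ : 0 < τ) (hτ : 1 ≤ τ * deriv (deriv f) τ) :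
    StrictAntiOn (fun x ↦ x * (1 - derivSubSlope f x)) (Ici τ) := by
  have hderiv : ∀ x ∈ Ici τ, HasDerivAt (fun x ↦ x * (1 - derivSubSlope f x)) _ x := fun x hx ↦
    have hx₀ : 0 < x := hτ₀.trans_le hx
    hasDerivAt_mul_one_sub_derivSubSlope (hf x hx₀) (hf' x hx₀) hx₀.ne'
  refine strictAntiOn_of_hasDerivWithinAt_neg (convex_Ici τ)
    (fun x hx ↦ (hderiv x hx).continuousAt.continuousWithinAt)
    (fun x hx ↦ (hderiv x (interior_subset hx)).hasDerivWithinAt) fun x hx ↦ ?_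
  rw [interior_Ici] at hx
  exact sub_neg.2 (hτ.trans_lt (hmono hτ₀ (hτ₀.trans hx) hx))

end DerivSubSlope

section LogExcess

/-- The logarithm of the left-hand side of the inequality of `stmt19`, as a function of `z = ζ`
with `Λ = Ψ(τ)` and `λ = Ψ(z)`, where `Ψ = derivSubSlope f`. -/
noncomputable def logExcess (f : ℝ → ℝ) (τ z : ℝ) : ℝ :=
  (1 - derivSubSlope f z) * (Real.log (1 - derivSubSlope f τ) - Real.log (1 - derivSubSlope f z)) +
    (derivSubSlope f τ - derivSubSlope f z) +
    derivSubSlope f z * (Real.log z - Real.log τ) + (f τ / τ - f z / z)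

variable {f : ℝ → ℝ} {τ z : ℝ}

theorem logExcess_self (f : ℝ → ℝ) (τ : ℝ) : logExcess f τ τ = 0 := by
  simp only [logExcess, sub_self, mul_zero, add_zero]

theorem exp_logExcess (hτ : 0 < τ) (hz : 0 < z) (hΨτ : derivSubSlope f τ < 1)
    (hΨz : derivSubSlope f z < 1) :
    Real.exp (logExcess f τ z) =
      ((1 - derivSubSlope f τ) / (1 - derivSubSlope f z)) ^ (1 - derivSubSlope f z) *
        Real.exp (derivSubSlope f τ - derivSubSlope f z) * (z / τ) ^ derivSubSlope f z *
        Real.exp (f τ / τ - f z / z) := by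
  have hτ' : 0 < 1 - derivSubSlope f τ := sub_pos.2 hΨτ
  have hz' : 0 < 1 - derivSubSlope f z := sub_pos.2 hΨz
  rw [Real.rpow_def_of_pos (div_pos hτ' hz'), Real.rpow_def_of_pos (div_pos hz hτ),
    Real.log_div hτ'.ne' hz'.ne', Real.log_div hz.ne' hτ.ne', ← Real.exp_add, ← Real.exp_add,
    ← Real.exp_add, logExcess, mul_comm (1 - derivSubSlope f z), mul_comm (derivSubSlope f z)]

theorem hasDerivAt_logExcess (hf : DifferentiableAt ℝ f z)
    (hf' : DifferentiableAt ℝ (deriv f) z) (hτ : 0 < τ) (hz : 0 < z)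
    (hΨτ : derivSubSlope f τ < 1) (hΨz : derivSubSlope f z < 1) :
    HasDerivAt (logExcess f τ)
      ((z * deriv (deriv f) z - derivSubSlope f z) / z *
        (Real.log (z * (1 - derivSubSlope f z)) - Real.log (τ * (1 - derivSubSlope f τ)))) z := by
  have hτ' : 1 - derivSubSlope f τ ≠ 0 := (sub_pos.2 hΨτ).ne'
  have hz' : 1 - derivSubSlope f z ≠ 0 := (sub_pos.2 hΨz).ne'
  have hΨ := hasDerivAt_derivSubSlope hf hf' hz.ne'
  have hentropy := (hΨ.const_sub 1).mul
    (((hΨ.const_sub 1).log hz').const_sub (Real.log (1 - derivSubSlope f τ)))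
  have hlog := hΨ.mul ((Real.hasDerivAt_log hz.ne').sub_const (Real.log τ))
  have hslope := (hasDerivAt_div_id hf hz.ne').const_sub (f τ / τ)
  refine (((hentropy.add (hΨ.const_sub (derivSubSlope f τ))).add hlog).add hslope).congr_deriv ?_
  rw [Real.log_mul hz.ne' hz', Real.log_mul hτ.ne' hτ']
  field_simp
  ring

theorem logExcess_neg (hf : ∀ x, 0 < x → DifferentiableAt ℝ f x)
    (hf' : ∀ x, 0 < x → DifferentiableAt ℝ (deriv f) x)
    (hmono : StrictMonoOn (fun x ↦ x * deriv (deriv f) x) (Ioi 0))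
    (hlt : ∀ x, 0 < x → derivSubSlope f x < x * deriv (deriv f) x)
    (hτ₀ : 0 < τ) (hτ : 1 ≤ τ * deriv (deriv f) τ) (hτz : τ < z) (hΨz : derivSubSlope f z < 1) :
    logExcess f τ z < 0 := by
  have hΨ : ∀ x ∈ Icc τ z, derivSubSlope f x < 1 := fun x hx ↦
    ((strictMonoOn_derivSubSlope hf hf' hlt).monotoneOn (hτ₀.trans_le hx.1) (hτ₀.trans hτz)
      hx.2).trans_lt hΨz
  have hderiv : ∀ x ∈ Icc τ z, HasDerivAt (logExcess f τ) _ x := fun x hx ↦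
    have hx₀ : 0 < x := hτ₀.trans_le hx.1
    hasDerivAt_logExcess (hf x hx₀) (hf' x hx₀) hτ₀ hx₀ (hΨ τ (left_mem_Icc.2 hτz.le)) (hΨ x hx)
  suffices hanti : StrictAntiOn (logExcess f τ) (Icc τ z) from
    (hanti (left_mem_Icc.2 hτz.le) (right_mem_Icc.2 hτz.le) hτz).trans_eq (logExcess_self f τ)
  refine strictAntiOn_of_hasDerivWithinAt_neg (convex_Icc τ z)
    (fun x hx ↦ (hderiv x hx).continuousAt.continuousWithinAt)
    (fun x hx ↦ (hderiv x (interior_subset hx)).hasDerivWithinAt) fun x hx ↦ ?_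
  have hΨx : derivSubSlope f x < 1 := hΨ x (interior_subset hx)
  rw [interior_Icc] at hx
  have hx₀ : 0 < x := hτ₀.trans hx.1
  have hdecr : x * (1 - derivSubSlope f x) < τ * (1 - derivSubSlope f τ) :=
    strictAntiOn_mul_one_sub_derivSubSlope hf hf' hmono hτ₀ hτ self_mem_Ici hx.1.le hx.1
  exact mul_neg_of_pos_of_neg (div_pos (sub_pos.2 (hlt x hx₀)) hx₀)
    (sub_neg.2 (Real.log_lt_log (mul_pos hx₀ (sub_pos.2 hΨx)) hdecr))

end LogExcess

section Om

variable {a : ℕ → ℝ} {C : ℝ}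

theorem norm_mul_pow_div_factorial_le (ha : ∀ t, |a t| ≤ C) {y R : ℝ} (hy : |y| ≤ R) (t : ℕ) :
    ‖a t * y ^ t / t.factorial‖ ≤ C * (R ^ t / t.factorial) := by
  have hC : 0 ≤ C := (abs_nonneg _).trans (ha t)
  rw [mul_div_assoc, norm_mul, norm_div, norm_pow, Real.norm_natCast, Real.norm_eq_abs,
    Real.norm_eq_abs]
  gcongr
  exact ha t

theorem summable_mul_pow_div_factorial (ha : ∀ t, |a t| ≤ C) (z : ℝ) :
    Summable fun t : ℕ ↦ a t * z ^ t / t.factorial :=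
  .of_norm_bounded ((Real.summable_pow_div_factorial |z|).mul_left C)
    (norm_mul_pow_div_factorial_le ha le_rfl)

theorem Om_eq_add_tsum_succ (ha : ∀ t, |a t| ≤ C) (z : ℝ) :
    Om a z = a 0 + ∑' t : ℕ, a (t + 1) * z ^ (t + 1) / (t + 1).factorial := by
  rw [Om, (summable_mul_pow_div_factorial ha z).tsum_eq_zero_add]
  simp only [pow_zero, mul_one, Nat.factorial_zero, Nat.cast_one, div_one]

theorem Om_zero (a : ℕ → ℝ) : Om a 0 = a 0 := by
  rw [Om, tsum_eq_single 0 fun t ht ↦ by simp [ht]]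
  simp

theorem hasDerivAt_mul_pow_succ_div_factorial (c : ℝ) (t : ℕ) (y : ℝ) :
    HasDerivAt (fun x ↦ c * x ^ (t + 1) / (t + 1).factorial) (c * y ^ t / t.factorial) y := by
  refine (((hasDerivAt_pow (t + 1) y).const_mul c).div_const _).congr_deriv ?_
  rw [Nat.factorial_succ, add_tsub_cancel_right]
  push_cast
  field_simp

theorem hasDerivAt_Om (ha : ∀ t, |a t| ≤ C) (z : ℝ) :
    HasDerivAt (Om a) (Om (fun t ↦ a (t + 1)) z) z := by
  rw [funext (Om_eq_add_tsum_succ ha)]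
  have hz : z ∈ Metric.ball (0 : ℝ) (|z| + 1) := by simp
  exact (hasDerivAt_tsum_of_isPreconnected
    ((Real.summable_pow_div_factorial (|z| + 1)).mul_left C) Metric.isOpen_ball
    (convex_ball _ _).isPreconnected
    (fun t y _ ↦ hasDerivAt_mul_pow_succ_div_factorial (a (t + 1)) t y)
    (fun t y hy ↦ norm_mul_pow_div_factorial_le (fun s ↦ ha (s + 1))
      (mem_ball_zero_iff.1 hy).le t)
    hz ((summable_nat_add_iff 1).2 (summable_mul_pow_div_factorial ha z)) hz).const_add (a 0)

theorem deriv_Om (ha : ∀ t, |a t| ≤ C) : deriv (Om a) = Om fun t ↦ a (t + 1) :=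
  funext fun z ↦ (hasDerivAt_Om ha z).deriv

theorem differentiable_Om (ha : ∀ t, |a t| ≤ C) : Differentiable ℝ (Om a) :=
  fun z ↦ (hasDerivAt_Om ha z).differentiableAt

theorem differentiable_deriv_Om (ha : ∀ t, |a t| ≤ C) : Differentiable ℝ (deriv (Om a)) :=
  deriv_Om ha ▸ differentiable_Om fun t ↦ ha (t + 1)

theorem deriv_deriv_Om (ha : ∀ t, |a t| ≤ C) : deriv (deriv (Om a)) = Om fun t ↦ a (t + 2) := by
  rw [deriv_Om ha, deriv_Om fun t ↦ ha (t + 1)]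

theorem Om_pos (ha : ∀ t, |a t| ≤ C) (ha₀ : ∀ t, 0 ≤ a t) (hne : ∃ t, a t ≠ 0) {z : ℝ}
    (hz : 0 < z) : 0 < Om a z := by
  obtain ⟨t, ht⟩ := hne
  have hat : 0 < a t := (ha₀ t).lt_of_ne' ht
  exact (summable_mul_pow_div_factorial ha z).tsum_pos
    (fun s ↦ div_nonneg (mul_nonneg (ha₀ s) (by positivity)) (by positivity)) t (by positivity)

theorem monotoneOn_Om (ha : ∀ t, |a t| ≤ C) (ha₀ : ∀ t, 0 ≤ a t) :
    MonotoneOn (Om a) (Ici 0) := fun x hx y _ hxy ↦ by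
  refine (summable_mul_pow_div_factorial ha x).tsum_le_tsum (fun t ↦ ?_)
    (summable_mul_pow_div_factorial ha y)
  have hx : 0 ≤ x := hx
  have hat := ha₀ t
  gcongr

theorem strictMonoOn_mul_Om (ha : ∀ t, |a t| ≤ C) (ha₀ : ∀ t, 0 ≤ a t) (hne : ∃ t, a t ≠ 0) :
    StrictMonoOn (fun z ↦ z * Om a z) (Ioi 0) := fun x (hx : 0 < x) y (hy : 0 < y) hxy ↦
  calc x * Om a x < y * Om a x := mul_lt_mul_of_pos_right hxy (Om_pos ha ha₀ hne hx)
    _ ≤ y * Om a y := mul_le_mul_of_nonneg_left (monotoneOn_Om ha ha₀ hx.le hy.le hxy.le) hy.le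

end Om

theorem stmt19_general {f : ℝ → ℝ} (hf : ∀ x, 0 ≤ x → DifferentiableAt ℝ f x)
    (hf' : ∀ x, 0 ≤ x → DifferentiableAt ℝ (deriv f) x) (hf₀ : 0 ≤ f 0)
    (hmono : StrictMonoOn (fun x ↦ x * deriv (deriv f) x) (Ioi 0))
    {τ : ℝ} (hτ₀ : 0 < τ) (hτ : τ * deriv (deriv f) τ = 1)
    {ζ : ℝ} (hζ₀ : 0 < ζ) (hτζ : derivSubSlope f τ < derivSubSlope f ζ)
    (hζ : derivSubSlope f ζ < 1) :
    τ < ζ ∧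
    ((1 - derivSubSlope f τ) / (1 - derivSubSlope f ζ)) ^ (1 - derivSubSlope f ζ) *
        Real.exp (derivSubSlope f τ - derivSubSlope f ζ) * (ζ / τ) ^ derivSubSlope f ζ *
        Real.exp (f τ / τ - f ζ / ζ) < 1 ∧
    1 < ζ * deriv (deriv f) ζ ∧
    (∀ ζ', 0 < ζ' → derivSubSlope f ζ' < derivSubSlope f τ → ζ' * deriv (deriv f) ζ' < 1) ∧
    (∀ ζ', 0 < ζ' → derivSubSlope f ζ' = derivSubSlope f τ → ζ' * deriv (deriv f) ζ' = 1) := by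
  have hlt : ∀ x, 0 < x → derivSubSlope f x < x * deriv (deriv f) x := fun x ↦
    derivSubSlope_lt_mul_deriv_deriv hf hf' hf₀ hmono
  replace hf : ∀ x, 0 < x → DifferentiableAt ℝ f x := fun x hx ↦ hf x hx.le
  replace hf' : ∀ x, 0 < x → DifferentiableAt ℝ (deriv f) x := fun x hx ↦ hf' x hx.le
  have hΨ : StrictMonoOn (derivSubSlope f) (Ioi 0) := strictMonoOn_derivSubSlope hf hf' hlt
  have hτ_lt_ζ : τ < ζ := (hΨ.lt_iff_lt hτ₀ hζ₀).1 hτζ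
  refine ⟨hτ_lt_ζ, ?_, hτ ▸ hmono hτ₀ hζ₀ hτ_lt_ζ, fun ζ' hζ' h ↦ ?_, fun ζ' hζ' h ↦ ?_⟩
  · rw [← exp_logExcess hτ₀ hζ₀ (hτζ.trans hζ) hζ, Real.exp_lt_one_iff]
    exact logExcess_neg hf hf' hmono hlt hτ₀ hτ.ge hτ_lt_ζ hζ
  · exact hτ ▸ hmono hζ' hτ₀ ((hΨ.lt_iff_lt hζ' hτ₀).1 h)
  · rw [hΨ.injOn hζ' hτ₀ h, hτ]

theorem stmt19 (ω : ℕ → ℝ)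
    (hnonneg : ∀ t, 0 ≤ ω t) (hbdd : ∃ C, ∀ t, ω t ≤ C)
    (h0 : ω 0 = 0) (h1 : ω 1 = 0) (hnz : ∃ t, ω t ≠ 0)
    (τ : ℝ) (hτpos : 0 < τ) (hτ : τ * deriv (deriv (Om ω)) τ = 1)
    (Λ : ℝ) (hΛ : Λ = Psi ω τ)
    (lam : ℝ) (hΛlam : Λ < lam) (hlam1 : lam < 1)
    (ζ : ℝ) (hζpos : 0 < ζ) (hζ : Psi ω ζ = lam) :
    τ < ζ ∧
    ((1 - Λ) / (1 - lam)) ^ (1 - lam) * Real.exp (Λ - lam) * (ζ / τ) ^ lam *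
        Real.exp (Om ω τ / τ - Om ω ζ / ζ) < 1 ∧
    1 < ζ * deriv (deriv (Om ω)) ζ ∧
    (∀ lam' ζ' : ℝ, 0 < lam' → lam' < Λ → 0 < ζ' → Psi ω ζ' = lam' →
      ζ' * deriv (deriv (Om ω)) ζ' < 1) ∧
    (∀ ζ' : ℝ, 0 < ζ' → Psi ω ζ' = Λ → ζ' * deriv (deriv (Om ω)) ζ' = 1) := by
  obtain ⟨C, hC⟩ := hbdd
  have hω : ∀ t, |ω t| ≤ C := fun t ↦ (abs_of_nonneg (hnonneg t)).trans_le (hC t)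
  have hne : ∃ t, ω (t + 2) ≠ 0 := by
    obtain ⟨_ | _ | t, ht⟩ := hnz
    exacts [absurd h0 ht, absurd h1 ht, ⟨t, ht⟩]
  have hmono : StrictMonoOn (fun z ↦ z * deriv (deriv (Om ω)) z) (Ioi 0) :=
    deriv_deriv_Om hω ▸ strictMonoOn_mul_Om (fun t ↦ hω (t + 2)) (fun t ↦ hnonneg (t + 2)) hne
  subst hΛ hζ
  obtain ⟨hlt, hineq, hgt, hsub, hcrit⟩ := stmt19_general (fun z _ ↦ differentiable_Om hω z)
    (fun z _ ↦ differentiable_deriv_Om hω z) ((Om_zero ω).trans h0).ge hmono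
    hτpos hτ hζpos hΛlam hlam1
  exact ⟨hlt, hineq, hgt, fun _ ζ' _ hlam hζ' h ↦ hsub ζ' hζ' (h.trans_lt hlam), hcrit⟩
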